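/- Let α > 0, 0 < u_min ≤ u_max, U = [u_min, u_max]^K and W = [−1/u_min^α, −1/u_max^α]^K. For any u_1, …, u_m ∈ U, the minimum over w ∈ W of (1/m)∑_{i=1}^m [Φ_α(w) − ⟨w, u_i⟩] equals F_α((1/m)∑_{i=1}^m u_i), and it is attained at the point w with components w_k = −(ū_k)^{−α}, where ū = (1/m)∑_{i=1}^m u_i. -/

import Mathlib

/-!
Since `w ↦ Φ_α(w) - ⟨w, u⟩` is affine in `u`, averaging over the slots replaces `u_i` by the mean
`ū`, and the problem separates over coordinates (`average_dual_eq`). For one coordinate, every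
negative number can be written as `-(s ^ (-α))` with `s > 0`, and
`φ_α(-(s ^ (-α))) + s ^ (-α) * t = f(s) + f'(s) * (t - s)`, where `f` is the scalar `α`-fair utility
with `f'(s) = s ^ (-α)` (`phiAlpha_tangent`). So the dual objective is a tangent line to the concave
function `f` evaluated at `t = ū_k`: it is at least `f(t)`, with equality when `s = t`.
Concavity comes down to the Bernoulli inequality `(r ^ (1 - α) - 1) / (1 - α) ≤ r - 1` for
`r = t / s`.
-/

/-- The generalized α-fairness function on `ℝ^K` (equation (1) of the paper). -/
noncomputable def Falpha {K : ℕ} (α : ℝ) (u : Fin K → ℝ) : ℝ :=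
  if α = 1 then ∑ k, Real.log (u k)
  else ∑ k, ((u k) ^ (1 - α) - 1) / (1 - α)

/-- Scalar conjugate term `φ_α` on `(-∞, 0)`. -/
noncomputable def phiAlpha (α : ℝ) (w : ℝ) : ℝ :=
  if α = 1 then -Real.log (-w) - 1
  else (α * (-w) ^ (1 - 1 / α) - 1) / (1 - α)

/-- `Φ_α(w) = ∑_k φ_α(w_k)`, the convex conjugate `(-F_α)^⋆`. -/
noncomputable def PhiAlpha {K : ℕ} (α : ℝ) (w : Fin K → ℝ) : ℝ :=
  ∑ k, phiAlpha α (w k)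

/-- The scalar `α`-fair utility, the summand of `Falpha`. -/
noncomputable def fairUtility (α t : ℝ) : ℝ :=
  if α = 1 then Real.log t else (t ^ (1 - α) - 1) / (1 - α)

lemma Falpha_eq_sum {K : ℕ} (α : ℝ) (u : Fin K → ℝ) :
    Falpha α u = ∑ k, fairUtility α (u k) := by
  unfold Falpha fairUtility
  split_ifs <;> rfl

/-- In the dual variable `w = -(s ^ (-α))`, the scalar dual objective is the tangent line to the
utility at `s`, evaluated at `t`. -/
lemma phiAlpha_tangent {α s : ℝ} (hα : 0 < α) (hs : 0 < s) (t : ℝ) :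
    phiAlpha α (-(s ^ (-α))) + s ^ (-α) * t = fairUtility α s + s ^ (-α) * (t - s) := by
  have hmul : s ^ (-α) * s = s ^ (1 - α) := by
    rw [← Real.rpow_add_one hs.ne']
    ring_nf
  unfold phiAlpha fairUtility
  rw [neg_neg, mul_sub, hmul]
  split_ifs with h
  · subst h
    rw [Real.log_rpow hs]
    norm_num
    ring
  · have h' : 1 - α ≠ 0 := sub_ne_zero.mpr (Ne.symm h)
    rw [← Real.rpow_mul hs.le,
      show -α * (1 - 1 / α) = 1 - α by field_simp; ring]
    field_simp
    ring

lemma rpow_sub_one_div_le {α r : ℝ} (hα : 0 < α) (h1 : α ≠ 1) (hr : 0 < r) :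
    (r ^ (1 - α) - 1) / (1 - α) ≤ r - 1 := by
  rcases lt_or_gt_of_ne h1 with h | h
  · have hb := rpow_one_add_le_one_add_mul_self (s := r - 1) (p := 1 - α)
      (by linarith) (by linarith) (by linarith)
    rw [add_sub_cancel] at hb
    rw [div_le_iff₀ (by linarith)]
    linarith
  -- The exponent is negative, so `exp x ≥ 1 + x` and `log r ≤ r - 1` combine.
  · have hb := Real.add_one_le_exp (Real.log r * (1 - α))
    rw [← Real.rpow_def_of_pos hr] at hb
    have hl := Real.log_le_sub_one_of_pos hr
    rw [div_le_iff_of_neg (by linarith)]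
    nlinarith

lemma fairUtility_le_tangent {α s t : ℝ} (hα : 0 < α) (hs : 0 < s) (ht : 0 < t) :
    fairUtility α t ≤ fairUtility α s + s ^ (-α) * (t - s) := by
  have hr : 0 < t / s := div_pos ht hs
  unfold fairUtility
  split_ifs with h
  · subst h
    have hl := Real.log_le_sub_one_of_pos hr
    rw [Real.log_div ht.ne' hs.ne'] at hl
    have : s ^ (-1 : ℝ) * (t - s) = t / s - 1 := by
      rw [Real.rpow_neg_one]
      field_simp
    linarith
  · have hb := mul_le_mul_of_nonneg_left (rpow_sub_one_div_le hα h hr)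
      (Real.rpow_pos_of_pos hs (1 - α)).le
    have hp : s ^ (1 - α) ≠ 0 := (Real.rpow_pos_of_pos hs _).ne'
    have hmul : s ^ (-α) * s = s ^ (1 - α) := by
      rw [← Real.rpow_add_one hs.ne']
      ring_nf
    have e1 : s ^ (1 - α) * ((t / s) ^ (1 - α) - 1) / (1 - α)
        = (t ^ (1 - α) - 1) / (1 - α) - (s ^ (1 - α) - 1) / (1 - α) := by
      rw [Real.div_rpow ht.le hs.le, mul_sub, mul_div_cancel₀ _ hp]
      ring
    have e2 : s ^ (1 - α) * (t / s - 1) = s ^ (-α) * (t - s) := by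
      rw [← hmul]
      field_simp
    rw [← mul_div_assoc, e1, e2] at hb
    linarith

/-- Weak duality in one coordinate: the substitution `s = (-w) ^ (-1 / α)` turns it into the tangent
line inequality. -/
lemma fairUtility_le_dual {α w t : ℝ} (hα : 0 < α) (hw : w < 0) (ht : 0 < t) :
    fairUtility α t ≤ phiAlpha α w - w * t := by
  have hs : 0 < (-w) ^ (-1 / α) := Real.rpow_pos_of_pos (neg_pos.mpr hw) _
  have hsw : ((-w) ^ (-1 / α)) ^ (-α) = -w := by
    rw [← Real.rpow_mul (neg_pos.mpr hw).le, show -1 / α * -α = 1 by field_simp, Real.rpow_one]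
  have h := fairUtility_le_tangent hα hs ht
  rw [← phiAlpha_tangent hα hs, hsw, neg_neg] at h
  linarith

/-- The slot-averaged dual objective depends on the utilities only through their mean, and separates
over coordinates. -/
lemma average_dual_eq {K m : ℕ} (hm : 0 < m) (α : ℝ) (u : Fin m → Fin K → ℝ) (ubar : Fin K → ℝ)
    (hubar : ∀ k, ubar k = (1 / (m : ℝ)) * ∑ i, u i k) (w : Fin K → ℝ) :
    (1 / (m : ℝ)) * ∑ i, (PhiAlpha α w - ∑ k, w k * u i k)
      = ∑ k, (phiAlpha α (w k) - w k * ubar k) := by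
  have hm' : (m : ℝ) ≠ 0 := by exact_mod_cast hm.ne'
  have e : ∑ k, w k * ubar k = (1 / (m : ℝ)) * ∑ i, ∑ k, w k * u i k := by
    rw [Finset.sum_comm, Finset.mul_sum]
    refine Finset.sum_congr rfl fun k _ => ?_
    rw [hubar, ← Finset.mul_sum]
    ring
  rw [Finset.sum_sub_distrib, Finset.sum_sub_distrib, e, mul_sub]
  simp only [Finset.sum_const, Finset.card_univ, Fintype.card_fin, nsmul_eq_mul, PhiAlpha]
  rw [← mul_assoc, one_div_mul_cancel hm', one_mul]

/-- for `u_1, …, u_m ∈ U = [u_min, u_max]^K`,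
`min_{w ∈ W} (1/m) ∑_i [Φ_α(w) − ⟨w, u_i⟩] = F_α(ū)` where `ū = (1/m) ∑_i u_i`, the minimum
being attained at the point with components `w_k = -(ū_k)^(-α)`. -/
theorem dual_min_of_averaged_utilities
    (K m : ℕ) (hm : 0 < m) (α : ℝ) (hα : 0 < α)
    (umin umax : ℝ) (h0 : 0 < umin) (h1 : umin ≤ umax)
    (W : Set (Fin K → ℝ))
    (hW : W = {w : Fin K → ℝ | ∀ k, w k ∈ Set.Icc (-1 / umin ^ α) (-1 / umax ^ α)})
    (u : Fin m → Fin K → ℝ) (hu : ∀ i k, u i k ∈ Set.Icc umin umax)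
    (ubar : Fin K → ℝ) (hubar : ∀ k, ubar k = (1 / (m : ℝ)) * ∑ i, u i k)
    (wstar : Fin K → ℝ) (hwstar : ∀ k, wstar k = -(ubar k) ^ (-α)) :
    wstar ∈ W ∧
    (1 / (m : ℝ)) * ∑ i, (PhiAlpha α wstar - ∑ k, wstar k * u i k) = Falpha α ubar ∧
    ∀ w ∈ W, Falpha α ubar ≤ (1 / (m : ℝ)) * ∑ i, (PhiAlpha α w - ∑ k, w k * u i k) := by
  have hm' : (0 : ℝ) < m := by exact_mod_cast hm
  have hmem : ∀ k, umin ≤ ubar k ∧ ubar k ≤ umax := by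
    intro k
    rw [hubar, one_div_mul_eq_div, le_div_iff₀ hm', div_le_iff₀ hm']
    have hl := Finset.card_nsmul_le_sum Finset.univ (fun i => u i k) umin fun i _ => (hu i k).1
    have hr := Finset.sum_le_card_nsmul Finset.univ (fun i => u i k) umax fun i _ => (hu i k).2
    simp only [Finset.card_univ, Fintype.card_fin, nsmul_eq_mul] at hl hr
    constructor <;> linarith
  have hpos : ∀ k, 0 < ubar k := fun k => h0.trans_le (hmem k).1
  have hmax : 0 < umax := h0.trans_le h1
  refine ⟨?_, ?_, ?_⟩
  · rw [hW]
    intro k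
    rw [hwstar, neg_div, neg_div, one_div, one_div, ← Real.rpow_neg h0.le, ← Real.rpow_neg hmax.le]
    exact ⟨neg_le_neg (Real.rpow_le_rpow_of_nonpos h0 (hmem k).1 (neg_nonpos.mpr hα.le)),
      neg_le_neg (Real.rpow_le_rpow_of_nonpos (hpos k) (hmem k).2 (neg_nonpos.mpr hα.le))⟩
  · rw [average_dual_eq hm α u ubar hubar, Falpha_eq_sum]
    refine Finset.sum_congr rfl fun k _ => ?_
    have h := phiAlpha_tangent hα (hpos k) (ubar k)
    rw [hwstar]
    linarith
  · intro w hw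
    rw [hW] at hw
    rw [average_dual_eq hm α u ubar hubar, Falpha_eq_sum]
    refine Finset.sum_le_sum fun k _ => fairUtility_le_dual hα ((hw k).2.trans_lt ?_) (hpos k)
    exact div_neg_of_neg_of_pos (by norm_num) (Real.rpow_pos_of_pos hmax α)
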